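/- Let G be a finitely generated group with semigroup presentation ψ : Σ → G, and let K be a finite subgroup of G. Then the language L(G,K,ψ) = { w ∈ Σ* : ψ(w) ∈ K } is context-free if and only if the language L(G,{1},ψ) = { w ∈ Σ* : ψ(w) = 1 } is context-free (i.e., if and only if G is a context-free group). -/

import Mathlib

/-!
If finitely many values are attained on a context-free language `L`, then a derivation tree of a
word of `L` meets each nonterminal only with finitely many group values: a subword `z` derived from
a nonterminal that occurs in a context `x _ y` satisfies `x z y ∈ L`, and cancellation leaves
finitely many values for `z`. Annotating nonterminals by these values keeps the grammar finite and
cuts out the words of `L` of any prescribed value. Conversely, the words of value `s` form the left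
quotient of the word problem by any word of value `s⁻¹`, and context-free languages are closed under
left quotients by words and under finite unions.
-/

/-- The rules of a context-free grammar, without its initial nonterminal. It need not be finite, so
that a grammar can be constructed first and its finiteness proved afterwards. -/
abbrev RuleSet (α N : Type*) := Set (ContextFreeRule α N)

namespace RuleSet

variable {α N N' : Type*} {R : RuleSet α N}

section Yields

/-- Big-step derivation: the sentential form `u` can be rewritten to the word `w`. Its derivations
are forests of parse trees, one tree for each symbol of `u`. -/
inductive Yields (R : RuleSet α N) : List (Symbol α N) → List α → Prop
  | nil : Yields R [] []
  | terminal (a : α) {u w} : Yields R u w → Yields R (.terminal a :: u) (a :: w)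
  | nonterminal {A o u v w} : ⟨A, o⟩ ∈ R → Yields R o v → Yields R u w →
      Yields R (.nonterminal A :: u) (v ++ w)

lemma Yields.singleton {A : N} {o : List (Symbol α N)} {w : List α} (hA : ⟨A, o⟩ ∈ R)
    (ho : R.Yields o w) : R.Yields [.nonterminal A] w := by
  simpa only [List.append_nil] using Yields.nonterminal hA ho .nil

lemma yields_map_terminal (w : List α) : R.Yields (w.map .terminal) w := by
  induction w with
  | nil => exact .nil
  | cons a w ih => exact .terminal a ih

lemma yields_append_iff {u₁ u₂ : List (Symbol α N)} {w : List α} :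
    R.Yields (u₁ ++ u₂) w ↔ ∃ w₁ w₂, R.Yields u₁ w₁ ∧ R.Yields u₂ w₂ ∧ w₁ ++ w₂ = w := by
  constructor
  · intro h
    induction u₁ generalizing w with
    | nil => exact ⟨[], w, .nil, h, rfl⟩
    | cons X u₁ ih =>
      cases h with
      | terminal a h =>
        obtain ⟨w₁, w₂, h₁, h₂, rfl⟩ := ih h
        exact ⟨a :: w₁, w₂, .terminal a h₁, h₂, rfl⟩
      | nonterminal hA ho h =>
        obtain ⟨w₁, w₂, h₁, h₂, rfl⟩ := ih h
        exact ⟨_, w₂, .nonterminal hA ho h₁, h₂, List.append_assoc ..⟩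
  · rintro ⟨w₁, w₂, h₁, h₂, rfl⟩
    induction h₁ with
    | nil => exact h₂
    | terminal a _ ih => exact .terminal a ih
    | nonterminal hA ho _ _ ih =>
      rw [List.append_assoc]
      exact .nonterminal hA ho ih

lemma Yields.of_rewrites {r : ContextFreeRule α N} (hr : r ∈ R) {u v : List (Symbol α N)}
    (huv : r.Rewrites u v) {w : List α} (hv : R.Yields v w) : R.Yields u w := by
  obtain ⟨p, q, rfl, rfl⟩ := huv.exists_parts
  simp only [yields_append_iff] at hv ⊢
  obtain ⟨_, w₃, ⟨w₁, w₂, h₁, h₂, rfl⟩, h₃, rfl⟩ := hv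
  exact ⟨_, w₃, ⟨w₁, w₂, h₁, .singleton hr h₂, rfl⟩, h₃, rfl⟩

lemma yields_rules_iff {g : ContextFreeGrammar α} {u : List (Symbol α g.NT)} {w : List α} :
    Yields (g.rules : Set _) u w ↔ g.Derives u (w.map .terminal) := by
  constructor
  · intro h
    induction h with
    | nil => rfl
    | terminal a _ ih => simpa using ih.append_left [.terminal a]
    | @nonterminal A o u v w hA _ _ iho ihu =>
      have hstep : g.Produces (.nonterminal A :: u) (o ++ u) := ⟨_, hA, .head u⟩
      simpa using hstep.trans_derives ((iho.append_right u).trans (ihu.append_left _))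
  · intro h
    induction h using Relation.ReflTransGen.head_induction_on with
    | refl => exact yields_map_terminal w
    | head hstep _ ih =>
      obtain ⟨r, hr, hrw⟩ := hstep
      exact .of_rewrites hr hrw ih

theorem isContextFree_iff_exists_finite {L : Language α} :
    L.IsContextFree ↔ ∃ (N : Type) (S : N) (R : RuleSet α N), R.Finite ∧
      ∀ w, w ∈ L ↔ R.Yields [.nonterminal S] w := by
  constructor
  · rintro ⟨g, rfl⟩
    exact ⟨g.NT, g.initial, g.rules, g.rules.finite_toSet, fun w => yields_rules_iff.symm⟩
  · rintro ⟨N, S, R, hR, hL⟩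
    refine ⟨⟨N, S, hR.toFinset⟩, Language.ext fun w => ?_⟩
    rw [hL, ContextFreeGrammar.mem_language_iff, ← yields_rules_iff, hR.coe_toFinset]

end Yields

section Relabel

/-- Renaming the nonterminals of a sentential form along `f`. -/
def relabel (f : N → N') : List (Symbol α N) → List (Symbol α N') :=
  List.map fun
    | .terminal a => .terminal a
    | .nonterminal A => .nonterminal (f A)

lemma yields_relabel_iff {R' : RuleSet α N'} {f : N → N'}
    (hf : ∀ A o', ⟨f A, o'⟩ ∈ R' ↔ ∃ o, ⟨A, o⟩ ∈ R ∧ relabel f o = o')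
    {u : List (Symbol α N)} {w : List α} : R'.Yields (relabel f u) w ↔ R.Yields u w := by
  constructor
  · generalize hu' : relabel f u = u'
    intro h
    induction h generalizing u with
    | nil =>
      obtain rfl := List.map_eq_nil_iff.1 hu'
      exact .nil
    | terminal a _ ih =>
      obtain ⟨_ | A, u, rfl, ⟨⟩, hu⟩ := List.map_eq_cons_iff.1 hu'
      exact .terminal a (ih hu)
    | nonterminal hA' _ _ iho ihu =>
      obtain ⟨_ | A, u, rfl, ⟨⟩, hu⟩ := List.map_eq_cons_iff.1 hu'
      obtain ⟨o, hA, ho⟩ := (hf A _).1 hA'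
      exact .nonterminal hA (iho ho) (ihu hu)
  · intro h
    induction h with
    | nil => exact .nil
    | terminal a _ ih => exact .terminal a ih
    | nonterminal hA _ _ iho ihu => exact .nonterminal ((hf _ _).2 ⟨_, hA, rfl⟩) iho ihu

end Relabel

section Union

variable {ι : Type*} {M : ι → Type*}

/-- The disjoint union of the rule sets `R i`, with a new nonterminal `none` that can be rewritten
to each of the `S i`. -/
def union (R : ∀ i, RuleSet α (M i)) (S : ∀ i, M i) : RuleSet α (Option (Σ i, M i)) :=
  {r | match r.input with
    | none => ∃ i, r.output = [.nonterminal (some ⟨i, S i⟩)]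
    | some X => ∃ o, ⟨X.2, o⟩ ∈ R X.1 ∧ relabel (fun A => some ⟨X.1, A⟩) o = r.output}

variable {R : ∀ i, RuleSet α (M i)} {S : ∀ i, M i}

lemma finite_union [Finite ι] (hR : ∀ i, (R i).Finite) : (union R S).Finite := by
  refine ((Set.finite_range fun i => ⟨none, [.nonterminal (some ⟨i, S i⟩)]⟩).union
    (Set.finite_iUnion fun i => (hR i).image fun r =>
      ⟨some ⟨i, r.input⟩, relabel (fun A => some ⟨i, A⟩) r.output⟩)).subset ?_
  rintro ⟨_ | ⟨i, A⟩, o'⟩ h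
  · obtain ⟨i, rfl⟩ := h
    exact .inl ⟨i, rfl⟩
  · obtain ⟨o, hA, rfl⟩ := h
    exact .inr (Set.mem_iUnion.2 ⟨i, ⟨A, o⟩, hA, rfl⟩)

lemma yields_union_some_iff {i : ι} {A : M i} {w : List α} :
    (union R S).Yields [.nonterminal (some ⟨i, A⟩)] w ↔ (R i).Yields [.nonterminal A] w :=
  yields_relabel_iff (R := R i) (f := fun A => some (Sigma.mk i A)) (u := [.nonterminal A])
    fun _ _ => Iff.rfl

lemma yields_union_none_iff {w : List α} :
    (union R S).Yields [.nonterminal none] w ↔ ∃ i, (R i).Yields [.nonterminal (S i)] w := by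
  constructor
  · rintro (_ | _ | ⟨⟨i, rfl⟩, ho, ⟨⟩⟩)
    rw [List.append_nil]
    exact ⟨i, yields_union_some_iff.1 ho⟩
  · rintro ⟨i, h⟩
    exact .singleton ⟨i, rfl⟩ (yields_union_some_iff.2 h)

theorem isContextFree_iSup {ι : Type} [Finite ι] {L : ι → Language α}
    (hL : ∀ i, (L i).IsContextFree) : (⨆ i, L i).IsContextFree := by
  choose N S R hR hL using fun i => isContextFree_iff_exists_finite.1 (hL i)
  refine isContextFree_iff_exists_finite.2 ⟨_, none, union R S, finite_union hR, fun w => ?_⟩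
  simp only [Language.mem_iSup, hL, yields_union_none_iff]

end Union

section LeftQuotient

/-- `DerivativeForm R a u u'` says that `u'` arises from `u` by erasing symbols that yield the empty
word and then removing the letter `a`, either directly or from the word that the next nonterminal
`A` will yield. In the latter case `A` becomes `Sum.inr A`, which stands for the derivative of `A`
by `a`; the untouched nonterminals `B` become `Sum.inl B`. -/
inductive DerivativeForm (R : RuleSet α N) (a : α) :
    List (Symbol α N) → List (Symbol α (N ⊕ N)) → Prop
  | terminal (u) : DerivativeForm R a (.terminal a :: u) (relabel .inl u)
  | nonterminal (A u) :
      DerivativeForm R a (.nonterminal A :: u) (.nonterminal (.inr A) :: relabel .inl u)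
  | skip {A u u'} : R.Yields [.nonterminal A] [] → DerivativeForm R a u u' →
      DerivativeForm R a (.nonterminal A :: u) u'

/-- The grammar rules for Brzozowski derivatives by the letter `a`: the nonterminal `Sum.inr A`
generates the words `w` such that `a :: w` is generated by `A`. -/
def derivative (R : RuleSet α N) (a : α) : RuleSet α (N ⊕ N) :=
  {r | match r.input with
    | .inl A => ∃ o, ⟨A, o⟩ ∈ R ∧ relabel .inl o = r.output
    | .inr A => ∃ o, ⟨A, o⟩ ∈ R ∧ DerivativeForm R a o r.output}

lemma finite_derivativeForm (R : RuleSet α N) (a : α) (u : List (Symbol α N)) :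
    {u' | DerivativeForm R a u u'}.Finite := by
  induction u with
  | nil => exact Set.finite_empty.subset fun _ h => nomatch h
  | cons X u ih =>
    refine ((ih.insert (relabel .inl u)).union (Set.finite_singleton
      (match X with
        | .terminal _ => []
        | .nonterminal A => .nonterminal (.inr A) :: relabel .inl u))).subset ?_
    rintro _ (_ | _ | ⟨-, h⟩)
    · exact .inl (.inl rfl)
    · exact .inr rfl
    · exact .inl (.inr h)

lemma finite_derivative (hR : R.Finite) (a : α) : (R.derivative a).Finite := by
  refine (hR.biUnion fun r _ =>
    (Set.finite_singleton ⟨.inl r.input, relabel .inl r.output⟩).union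
      ((finite_derivativeForm R a r.output).image (ContextFreeRule.mk (.inr r.input)))).subset ?_
  rintro ⟨A | A, o'⟩ ⟨o, hA, ho⟩
  · exact Set.mem_biUnion hA (.inl (congrArg _ ho.symm))
  · exact Set.mem_biUnion hA (.inr ⟨o', ho, rfl⟩)

lemma yields_derivative_relabel_inl_iff {a : α} {u : List (Symbol α N)} {w : List α} :
    (R.derivative a).Yields (relabel .inl u) w ↔ R.Yields u w :=
  yields_relabel_iff fun _ _ => Iff.rfl

lemma Yields.exists_derivativeForm {a : α} {u : List (Symbol α N)} {w : List α}
    (h : R.Yields u (a :: w)) : ∃ u', DerivativeForm R a u u' ∧ (R.derivative a).Yields u' w := by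
  generalize hx : a :: w = x at h
  induction h generalizing w with
  | nil => cases hx
  | terminal _ h =>
    cases hx
    exact ⟨_, .terminal _, yields_derivative_relabel_inl_iff.2 h⟩
  | @nonterminal A o u v w' hA ho hu iho ihu =>
    cases v with
    | nil =>
      obtain ⟨u', hu', hw⟩ := ihu hx
      exact ⟨u', .skip (.singleton hA ho) hu', hw⟩
    | cons b v =>
      obtain ⟨rfl, rfl⟩ := List.cons_eq_cons.1 hx
      obtain ⟨o', ho', hv⟩ := iho rfl
      exact ⟨_, .nonterminal A u,
        .nonterminal ⟨o, hA, ho'⟩ hv (yields_derivative_relabel_inl_iff.2 hu)⟩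

lemma Yields.of_derivative_inr {a : α} {A : N} {u : List (Symbol α N)} {w : List α}
    (h : (R.derivative a).Yields (.nonterminal (.inr A) :: relabel .inl u) w) :
    R.Yields (.nonterminal A :: u) (a :: w) := by
  generalize hX : Symbol.nonterminal (Sum.inr A) :: relabel Sum.inl u = X at h
  induction h generalizing A u with
  | nil | terminal => cases hX
  | @nonterminal _ o' _ v _ hA' ho' hu iho =>
    obtain ⟨⟨⟩, rfl⟩ := List.cons_eq_cons.1 hX
    obtain ⟨o, hA, hoo' : DerivativeForm R a o o'⟩ := hA'
    have ho : R.Yields o (a :: v) := by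
      clear hA
      induction hoo' with
      | terminal u => exact .terminal a (yields_derivative_relabel_inl_iff.1 ho')
      | nonterminal B u => exact iho rfl
      | skip hB _ ih => exact yields_append_iff.2 ⟨[], _, hB, ih ho' iho, rfl⟩
    exact .nonterminal hA ho (yields_derivative_relabel_inl_iff.1 hu)

lemma yields_derivative_inr_iff {a : α} {A : N} {w : List α} :
    (R.derivative a).Yields [.nonterminal (.inr A)] w ↔ R.Yields [.nonterminal A] (a :: w) := by
  refine ⟨fun h => .of_derivative_inr h, fun h => ?_⟩
  obtain ⟨_, _ | _ | ⟨-, ⟨⟩⟩, hw⟩ := h.exists_derivativeForm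
  exact hw

theorem isContextFree_leftQuotient {L : Language α} (hL : L.IsContextFree) (x : List α) :
    (L.leftQuotient x).IsContextFree := by
  induction x generalizing L with
  | nil => exact hL
  | cons a x ih =>
    suffices (L.leftQuotient [a]).IsContextFree by
      rw [← List.singleton_append, Language.leftQuotient_append]
      exact ih this
    obtain ⟨N, S, R, hR, hL⟩ := isContextFree_iff_exists_finite.1 hL
    refine isContextFree_iff_exists_finite.2
      ⟨N ⊕ N, .inr S, R.derivative a, finite_derivative hR a, fun w => ?_⟩
    rw [yields_derivative_inr_iff, ← hL, Language.mem_leftQuotient, List.singleton_append]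

end LeftQuotient

section Annotate

variable {M : Type*} {V : N → Set M}

/-- `u'` is the sentential form `u` with every nonterminal `A` annotated by an element of `V A`. -/
def Annotates (V : N → Set M) : List (Symbol α N) → List (Symbol α (N × M)) → Prop :=
  List.Forall₂ fun
    | .terminal a, X' => X' = .terminal a
    | .nonterminal A, X' => ∃ m ∈ V A, X' = .nonterminal (A, m)

lemma finite_annotates (hV : ∀ A, (V A).Finite) (u : List (Symbol α N)) :
    {u' | Annotates V u u'}.Finite := by
  induction u with
  | nil => exact (Set.finite_singleton []).subset fun _ h => List.forall₂_nil_left_iff.1 h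
  | cons X u ih =>
    cases X with
    | terminal a =>
      refine (ih.image (List.cons (.terminal a))).subset ?_
      rintro _ (_ | ⟨rfl, hu⟩)
      exact ⟨_, hu, rfl⟩
    | nonterminal A =>
      refine (Set.Finite.image2 (fun m u' => .nonterminal (A, m) :: u') (hV A) ih).subset ?_
      rintro _ (_ | ⟨⟨m, hm, rfl⟩, hu⟩)
      exact ⟨m, hm, _, hu, rfl⟩

variable [Monoid M] {φ : α → M}

/-- The value of an annotated sentential form: terminals are evaluated by `φ`, nonterminals by
their annotation. -/
def annotatedValue (φ : α → M) (u : List (Symbol α (N × M))) : M :=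
  (u.map fun
    | .terminal a => φ a
    | .nonterminal X => X.2).prod

/-- The grammar rules in which the nonterminal `(A, m)` generates the words of value `m` generated
by `A`, with annotations restricted to `V`. -/
def annotate (R : RuleSet α N) (V : N → Set M) (φ : α → M) : RuleSet α (N × M) :=
  {r | ∃ o, ⟨r.input.1, o⟩ ∈ R ∧ Annotates V o r.output ∧ annotatedValue φ r.output = r.input.2}

lemma finite_annotate (hR : R.Finite) (hV : ∀ A, (V A).Finite) (φ : α → M) :
    (R.annotate V φ).Finite := by
  refine (hR.biUnion fun r _ => (finite_annotates hV r.output).image fun o' =>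
    ContextFreeRule.mk (r.input, annotatedValue φ o') o').subset ?_
  rintro ⟨⟨A, m⟩, o'⟩ ⟨o, hA, ho, hm⟩
  obtain rfl : annotatedValue φ o' = m := hm
  exact Set.mem_biUnion hA ⟨o', ho, rfl⟩

lemma Yields.of_annotate {u : List (Symbol α N)} {u' : List (Symbol α (N × M))} {w : List α}
    (h : (R.annotate V φ).Yields u' w) (hu : Annotates V u u') :
    R.Yields u w ∧ (w.map φ).prod = annotatedValue φ u' := by
  induction h generalizing u with
  | nil =>
    cases hu
    exact ⟨.nil, rfl⟩
  | terminal a _ ih =>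
    obtain _ | @⟨_ | A, _, u, _, hX, hu⟩ := hu
    · cases hX
      obtain ⟨hw, hval⟩ := ih hu
      exact ⟨.terminal a hw, by simp [annotatedValue, hval]⟩
    · obtain ⟨_, _, ⟨⟩⟩ := hX
  | nonterminal hA' _ _ iho ihu =>
    obtain _ | @⟨_ | A, _, u, _, hX, hu⟩ := hu
    · cases hX
    · obtain ⟨m, -, ⟨⟩⟩ := hX
      obtain ⟨o, hA, ho, hm⟩ := hA'
      obtain ⟨hv, hval⟩ := iho ho
      obtain ⟨hw, hval'⟩ := ihu hu
      exact ⟨.nonterminal hA hv hw, by simp_all [annotatedValue]⟩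

lemma Yields.of_annotate_nonterminal {A : N} {m : M} {w : List α}
    (h : (R.annotate V φ).Yields [.nonterminal (A, m)] w) :
    R.Yields [.nonterminal A] w ∧ (w.map φ).prod = m := by
  obtain _ | _ | ⟨⟨o, hA, ho, hm⟩, ho', ⟨⟩⟩ := h
  obtain ⟨hw, hval⟩ := ho'.of_annotate ho
  rw [List.append_nil]
  exact ⟨.singleton hA hw, hval.trans hm⟩

/-- The values of the words generated by `A`, provided that `A` occurs in some context `x _ y`
within `L`. -/
def attainedValues (R : RuleSet α N) (L : Language α) (φ : α → M) (A : N) : Set M :=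
  {m | ∃ x y, (∀ z, R.Yields [.nonterminal A] z → x ++ z ++ y ∈ L) ∧
    ∃ z, R.Yields [.nonterminal A] z ∧ (z.map φ).prod = m}

variable {L : Language α}

lemma finite_attainedValues
    (hfin : ∀ x y, {m | ∃ z, x ++ z ++ y ∈ L ∧ (z.map φ).prod = m}.Finite) (A : N) :
    (R.attainedValues L φ A).Finite := by
  by_cases h : ∃ x y, ∀ z, R.Yields [.nonterminal A] z → x ++ z ++ y ∈ L
  · obtain ⟨x, y, hxy⟩ := h
    refine (hfin x y).subset ?_
    rintro m ⟨-, -, -, z, hz, hm⟩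
    exact ⟨z, hxy z hz, hm⟩
  · exact Set.finite_empty.subset fun m ⟨x, y, hxy, _⟩ => h ⟨x, y, hxy⟩

lemma Yields.exists_annotates {u : List (Symbol α N)} {w : List α} (h : R.Yields u w)
    {x y : List α} (hxy : ∀ z, R.Yields u z → x ++ z ++ y ∈ L) :
    ∃ u', Annotates (R.attainedValues L φ) u u' ∧ annotatedValue φ u' = (w.map φ).prod ∧
      (R.annotate (R.attainedValues L φ) φ).Yields u' w := by
  induction h generalizing x y with
  | nil => exact ⟨[], .nil, rfl, .nil⟩
  | terminal a _ ih =>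
    obtain ⟨u', hu, hval, hw⟩ := ih (x := x ++ [a]) (y := y) fun z hz => by
      simpa using hxy _ (.terminal a hz)
    exact ⟨.terminal a :: u', .cons rfl hu, by simp_all [annotatedValue], .terminal a hw⟩
  | @nonterminal A o u v w hA ho hu iho ihu =>
    have hA_context : ∀ z, R.Yields [.nonterminal A] z → x ++ z ++ (w ++ y) ∈ L := fun z hz => by
      simpa using hxy _ (yields_append_iff.2 ⟨z, w, hz, hu, rfl⟩)
    have hA_value : (v.map φ).prod ∈ R.attainedValues L φ A :=
      ⟨x, w ++ y, hA_context, v, .singleton hA ho, rfl⟩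
    obtain ⟨o', ho', hoval, hv⟩ := iho fun z hz => hA_context z (.singleton hA hz)
    obtain ⟨u', hu', huval, hw⟩ := ihu (x := x ++ v) (y := y) fun z hz => by
      simpa using hxy _ (.nonterminal hA ho hz)
    exact ⟨.nonterminal (A, (v.map φ).prod) :: u', .cons ⟨_, hA_value, rfl⟩ hu',
      by simp_all [annotatedValue], .nonterminal ⟨o, hA, ho', hoval⟩ hv hw⟩

theorem isContextFree_setOf_prod_eq {M : Type} [Monoid M] {φ : α → M} (hL : L.IsContextFree)
    (hfin : ∀ x y, {m | ∃ z, x ++ z ++ y ∈ L ∧ (z.map φ).prod = m}.Finite) (m : M) :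
    Language.IsContextFree {w | w ∈ L ∧ (w.map φ).prod = m} := by
  obtain ⟨N, S, R, hR, hL⟩ := isContextFree_iff_exists_finite.1 hL
  refine isContextFree_iff_exists_finite.2 ⟨N × M, (S, m), R.annotate (R.attainedValues L φ) φ,
    finite_annotate hR (finite_attainedValues hfin) φ, fun w => ?_⟩
  constructor
  · rintro ⟨hw, hm⟩
    obtain ⟨u', hu, hval, hyields⟩ := ((hL w).1 hw).exists_annotates (φ := φ) (x := []) (y := [])
      fun z hz => by simpa using (hL z).2 hz
    obtain _ | ⟨⟨k, -, rfl⟩, ⟨⟩⟩ := hu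
    obtain rfl : k = m := by simpa [annotatedValue, hm] using hval
    exact hyields
  · intro h
    obtain ⟨hw, hm⟩ := h.of_annotate_nonterminal
    exact ⟨(hL w).2 hw, hm⟩

end Annotate

end RuleSet

section WordProblem

/-- The language `L(M, S, ψ)` of the words over `α` whose value under `ψ` lies in `S`. -/
def wordProblem {α M : Type*} [Monoid M] (ψ : α → M) (S : Set M) : Language α :=
  {w | (w.map ψ).prod ∈ S}

lemma mem_wordProblem {α M : Type*} [Monoid M] {ψ : α → M} {S : Set M} {w : List α} :
    w ∈ wordProblem ψ S ↔ (w.map ψ).prod ∈ S :=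
  Iff.rfl

lemma isContextFree_wordProblem_singleton_of_mem {α : Type*} {M : Type} [CancelMonoid M]
    {ψ : α → M} {S : Set M} (hS : S.Finite) (h : (wordProblem ψ S).IsContextFree) {s : M}
    (hs : s ∈ S) : (wordProblem ψ {s}).IsContextFree := by
  have hfin (x y : List α) :
      {m | ∃ z, x ++ z ++ y ∈ wordProblem ψ S ∧ (z.map ψ).prod = m}.Finite := by
    have hinj : Function.Injective fun m => (x.map ψ).prod * m * (y.map ψ).prod :=
      (mul_left_injective _).comp (mul_right_injective _)
    refine (hS.preimage hinj.injOn).subset ?_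
    rintro _ ⟨z, hz, rfl⟩
    simpa [mem_wordProblem, mul_assoc] using hz
  have hsingleton : wordProblem ψ {s} = {w | w ∈ wordProblem ψ S ∧ (w.map ψ).prod = s} :=
    Language.ext fun w => (and_iff_right_of_imp fun hw : (w.map ψ).prod = s =>
      (Set.mem_of_eq_of_mem hw hs : (w.map ψ).prod ∈ S)).symm
  rw [hsingleton]
  exact RuleSet.isContextFree_setOf_prod_eq h hfin s

variable {G : Type*} [Group G] {α : Type*} {ψ : α → G}

lemma leftQuotient_wordProblem_singleton (g : G) (x : List α) :
    (wordProblem ψ {g}).leftQuotient x = wordProblem ψ {(x.map ψ).prod⁻¹ * g} := by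
  ext w
  simp only [Language.mem_leftQuotient, mem_wordProblem, Set.mem_singleton_iff, List.map_append,
    List.prod_append, eq_inv_mul_iff_mul_eq]

lemma isContextFree_wordProblem_singleton (hψ : ∀ g : G, ∃ w : List α, (w.map ψ).prod = g) {g : G}
    (hg : (wordProblem ψ {g}).IsContextFree) (k : G) : (wordProblem ψ {k}).IsContextFree := by
  obtain ⟨x, hx⟩ := hψ (g * k⁻¹)
  simpa [leftQuotient_wordProblem_singleton, hx] using RuleSet.isContextFree_leftQuotient hg x

end WordProblem

theorem contextFree_pair_finite_subgroup_iff_general {G : Type} [Group G] {S : Set G}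
    (hS : S.Finite) (hne : S.Nonempty) {α : Type*} (ψ : α → G)
    (hψ : ∀ g : G, ∃ w : List α, (w.map ψ).prod = g) :
    (wordProblem ψ S).IsContextFree ↔ (wordProblem ψ {1}).IsContextFree := by
  constructor
  · intro h
    obtain ⟨s, hs⟩ := hne
    exact isContextFree_wordProblem_singleton hψ
      (isContextFree_wordProblem_singleton_of_mem hS h hs) 1
  · intro h
    have : Finite S := hS
    have hunion : wordProblem ψ S = ⨆ s : S, wordProblem ψ {s.1} := by
      ext w
      simp [mem_wordProblem, Language.mem_iSup]
    rw [hunion]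
    exact RuleSet.isContextFree_iSup fun s => isContextFree_wordProblem_singleton hψ h s

/-- For a finite subgroup `K` of a finitely generated group `G`,
the language `L(G,K,ψ)` is context-free iff the word problem `L(G,{1},ψ)` of `G` is
context-free (i.e. iff `G` is a context-free group). -/
theorem contextFree_pair_finite_subgroup_iff
    {G : Type} [Group G] [Group.FG G] (K : Subgroup G) (hK : (K : Set G).Finite)
    {α : Type} [Fintype α] (ψ : α → G)
    (hψ : ∀ g : G, ∃ w : List α, (w.map ψ).prod = g) :
    Language.IsContextFree {w : List α | (w.map ψ).prod ∈ K} ↔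
      Language.IsContextFree {w : List α | (w.map ψ).prod = 1} :=
  contextFree_pair_finite_subgroup_iff_general hK ⟨1, K.one_mem⟩ ψ hψ
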